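/- The linear growth bound for the MG symbol is sharp: for every N > 0 and every integer j ≥ 1, the frequency k = (j², j, 1) satisfies M̂_3(k) ≥ (N² / (√3 (3N⁴ + 1))) · √(j⁴ + j² + 1) = (N² / (√3 (3N⁴ + 1))) · |k|. In particular M̂_3 is unbounded on ℤ³. -/

import Mathlib

/-- `|k|²` for `k = (k1,k2,k3) ∈ ℤ³`, as a real number. -/
noncomputable def kSq (k1 k2 k3 : ℤ) : ℝ := (k1 : ℝ) ^ 2 + (k2 : ℝ) ^ 2 + (k3 : ℝ) ^ 2

/-- The denominator `D(k) = N⁴|k|²k3² + k2⁴` of the MG symbols. -/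
noncomputable def Dmg (N : ℝ) (k1 k2 k3 : ℤ) : ℝ :=
  N ^ 4 * kSq k1 k2 k3 * (k3 : ℝ) ^ 2 + (k2 : ℝ) ^ 4

/-- The first magnetogeostrophic symbol `M̂₁(k)`. -/
noncomputable def Mhat1 (N : ℝ) (k1 k2 k3 : ℤ) : ℝ :=
  if k3 = 0 then 0 else
    (N ^ 4 * (k2 : ℝ) * (k3 : ℝ) * kSq k1 k2 k3
      - N ^ 2 * (k1 : ℝ) * (k2 : ℝ) ^ 2 * (k3 : ℝ)) / Dmg N k1 k2 k3

/-- The second magnetogeostrophic symbol `M̂₂(k)`. -/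
noncomputable def Mhat2 (N : ℝ) (k1 k2 k3 : ℤ) : ℝ :=
  if k3 = 0 then 0 else
    (-N ^ 4 * (k1 : ℝ) * (k3 : ℝ) * kSq k1 k2 k3
      - N ^ 2 * (k2 : ℝ) ^ 3 * (k3 : ℝ)) / Dmg N k1 k2 k3

/-- The third magnetogeostrophic symbol `M̂₃(k)`. -/
noncomputable def Mhat3 (N : ℝ) (k1 k2 k3 : ℤ) : ℝ :=
  if k3 = 0 then 0 else
    (N ^ 2 * (k1 : ℝ) ^ 2 * (k2 : ℝ) ^ 2 + N ^ 2 * (k2 : ℝ) ^ 4) / Dmg N k1 k2 k3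

/-!
Where `|k|² k3² ≤ C k2⁴`, the second term of `D(k)` controls the first, so `D(k)` is of size
`k2⁴` and `M̂₃(k)` of size `(k1² + k2²) / k2²`. If moreover `k2² ≤ |k1|`, this quotient is at
least `k2²`, which by the first condition is at least `|k| |k3| / √C`. The curve `(j², j, 1)`
stays in this region with `C = 3`.
-/

theorem sq_le_add_sq_div_sq_of_sq_le_abs {a b : ℝ} (hb : b ≠ 0) (hab : b ^ 2 ≤ |a|) :
    b ^ 2 ≤ (a ^ 2 + b ^ 2) / b ^ 2 := by
  rw [le_div_iff₀ (by positivity)]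
  calc
    b ^ 2 * b ^ 2 ≤ |a| * |a| := by gcongr
    _ = a ^ 2 := by rw [abs_mul_abs_self, sq]
    _ ≤ a ^ 2 + b ^ 2 := le_add_of_nonneg_right (sq_nonneg b)

theorem kSq_nonneg (k1 k2 k3 : ℤ) : 0 ≤ kSq k1 k2 k3 := by
  unfold kSq
  positivity

theorem kSq_pos_of_right_ne_zero (k1 k2 : ℤ) {k3 : ℤ} (hk3 : k3 ≠ 0) : 0 < kSq k1 k2 k3 := by
  unfold kSq
  positivity

theorem kSq_sq_self_one (j : ℤ) : kSq (j ^ 2) j 1 = (j : ℝ) ^ 4 + (j : ℝ) ^ 2 + 1 := by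
  simp only [kSq, Int.cast_pow, Int.cast_one]
  ring

theorem kSq_sq_self_one_le {j : ℤ} (hj : j ≠ 0) : kSq (j ^ 2) j 1 ≤ 3 * (j : ℝ) ^ 4 := by
  have one_le_sq : (1 : ℝ) ≤ (j : ℝ) ^ 2 := by
    exact_mod_cast (sq_pos_of_ne_zero hj : 0 < j ^ 2)
  have sq_le_fourth : (j : ℝ) ^ 2 ≤ (j : ℝ) ^ 4 := by
    calc
      (j : ℝ) ^ 2 ≤ (j : ℝ) ^ 2 * (j : ℝ) ^ 2 := le_mul_of_one_le_left (sq_nonneg _) one_le_sq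
      _ = (j : ℝ) ^ 4 := by ring
  rw [kSq_sq_self_one]
  linarith

theorem Dmg_pos (N : ℝ) (k1 k3 : ℤ) {k2 : ℤ} (hk2 : k2 ≠ 0) : 0 < Dmg N k1 k2 k3 := by
  have kSq_nonneg : 0 ≤ kSq k1 k2 k3 := kSq_nonneg k1 k2 k3
  unfold Dmg
  positivity

section DominantSecondFrequency

variable {C : ℝ} {k1 k2 k3 : ℤ}

theorem ne_zero_of_kSq_mul_sq_le (hk3 : k3 ≠ 0)
    (hC : kSq k1 k2 k3 * (k3 : ℝ) ^ 2 ≤ C * (k2 : ℝ) ^ 4) : k2 ≠ 0 := by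
  rintro rfl
  have kSq_pos : 0 < kSq k1 0 k3 := kSq_pos_of_right_ne_zero k1 0 hk3
  have kSq_mul_nonpos : kSq k1 0 k3 * (k3 : ℝ) ^ 2 ≤ 0 := hC.trans_eq (by simp)
  exact kSq_mul_nonpos.not_gt (by positivity)

theorem Dmg_le_of_kSq_mul_sq_le (N : ℝ)
    (hC : kSq k1 k2 k3 * (k3 : ℝ) ^ 2 ≤ C * (k2 : ℝ) ^ 4) :
    Dmg N k1 k2 k3 ≤ (C * N ^ 4 + 1) * (k2 : ℝ) ^ 4 :=
  calc
    Dmg N k1 k2 k3 = N ^ 4 * (kSq k1 k2 k3 * (k3 : ℝ) ^ 2) + (k2 : ℝ) ^ 4 := by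
      rw [Dmg, mul_assoc]
    _ ≤ N ^ 4 * (C * (k2 : ℝ) ^ 4) + (k2 : ℝ) ^ 4 := by gcongr
    _ = (C * N ^ 4 + 1) * (k2 : ℝ) ^ 4 := by ring

theorem le_Mhat3_of_kSq_mul_sq_le (N : ℝ) (hk3 : k3 ≠ 0)
    (hC : kSq k1 k2 k3 * (k3 : ℝ) ^ 2 ≤ C * (k2 : ℝ) ^ 4) :
    N ^ 2 / (C * N ^ 4 + 1) * (((k1 : ℝ) ^ 2 + (k2 : ℝ) ^ 2) / (k2 : ℝ) ^ 2)
      ≤ Mhat3 N k1 k2 k3 := by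
  have hk2 : k2 ≠ 0 := ne_zero_of_kSq_mul_sq_le hk3 hC
  calc
    _ = N ^ 2 * (k2 : ℝ) ^ 2 * ((k1 : ℝ) ^ 2 + (k2 : ℝ) ^ 2)
          / ((C * N ^ 4 + 1) * (k2 : ℝ) ^ 4) := by field_simp
    _ ≤ N ^ 2 * (k2 : ℝ) ^ 2 * ((k1 : ℝ) ^ 2 + (k2 : ℝ) ^ 2) / Dmg N k1 k2 k3 :=
      div_le_div_of_nonneg_left (by positivity) (Dmg_pos N k1 k3 hk2)
        (Dmg_le_of_kSq_mul_sq_le N hC)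
    _ = Mhat3 N k1 k2 k3 := by
      rw [Mhat3, if_neg hk3]
      ring

theorem sqrt_kSq_mul_abs_le (hC : kSq k1 k2 k3 * (k3 : ℝ) ^ 2 ≤ C * (k2 : ℝ) ^ 4) :
    √(kSq k1 k2 k3) * |(k3 : ℝ)| ≤ √C * (k2 : ℝ) ^ 2 :=
  calc
    √(kSq k1 k2 k3) * |(k3 : ℝ)| = √(kSq k1 k2 k3 * (k3 : ℝ) ^ 2) := by
      rw [Real.sqrt_mul (kSq_nonneg k1 k2 k3), Real.sqrt_sq_eq_abs]
    _ ≤ √(C * ((k2 : ℝ) ^ 2) ^ 2) := Real.sqrt_le_sqrt (by rwa [← pow_mul])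
    _ = √C * (k2 : ℝ) ^ 2 := by
      rw [Real.sqrt_mul' C (sq_nonneg _), Real.sqrt_sq (sq_nonneg _)]

theorem mg_symbol3_linear_growth_sharp_general (N : ℝ) (hk3 : k3 ≠ 0)
    (hC : kSq k1 k2 k3 * (k3 : ℝ) ^ 2 ≤ C * (k2 : ℝ) ^ 4) (hk1 : k2 ^ 2 ≤ |k1|) :
    N ^ 2 / (√C * (C * N ^ 4 + 1)) * (√(kSq k1 k2 k3) * |(k3 : ℝ)|) ≤ Mhat3 N k1 k2 k3 := by
  have hk2 : k2 ≠ 0 := ne_zero_of_kSq_mul_sq_le hk3 hC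
  have C_pos : 0 < C := by
    have kSq_pos : 0 < kSq k1 k2 k3 := kSq_pos_of_right_ne_zero k1 k2 hk3
    exact pos_of_mul_pos_left (lt_of_lt_of_le (by positivity) hC) (by positivity)
  calc
    _ ≤ N ^ 2 / (√C * (C * N ^ 4 + 1)) * (√C * (k2 : ℝ) ^ 2) := by
      gcongr ?_ * ?_
      exact sqrt_kSq_mul_abs_le hC
    _ = N ^ 2 / (C * N ^ 4 + 1) * (k2 : ℝ) ^ 2 := by field_simp
    _ ≤ N ^ 2 / (C * N ^ 4 + 1) * (((k1 : ℝ) ^ 2 + (k2 : ℝ) ^ 2) / (k2 : ℝ) ^ 2) := by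
      gcongr ?_ * ?_
      exact sq_le_add_sq_div_sq_of_sq_le_abs (by exact_mod_cast hk2) (by exact_mod_cast hk1)
    _ ≤ Mhat3 N k1 k2 k3 := le_Mhat3_of_kSq_mul_sq_le N hk3 hC

end DominantSecondFrequency

/-- **Sharpness of the linear growth bound:** for every `N > 0` and every integer `j ≥ 1`,
the frequency `k = (j², j, 1)` satisfies
`M̂₃(k) ≥ (N²/(√3 (3N⁴ + 1))) · √(j⁴ + j² + 1) = (N²/(√3 (3N⁴ + 1))) · |k|`.
In particular `M̂₃` is unbounded on `ℤ³`. -/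
theorem mg_symbol3_linear_growth_sharp (N : ℝ) (hN : 0 < N) (j : ℤ) (hj : 1 ≤ j) :
    N ^ 2 / (Real.sqrt 3 * (3 * N ^ 4 + 1))
        * Real.sqrt ((j : ℝ) ^ 4 + (j : ℝ) ^ 2 + 1)
      ≤ Mhat3 N (j ^ 2) j 1 := by
  have hC : kSq (j ^ 2) j 1 ≤ 3 * (j : ℝ) ^ 4 := kSq_sq_self_one_le (by lia)
  simpa [kSq_sq_self_one] using
    mg_symbol3_linear_growth_sharp_general (k3 := 1) N one_ne_zero (by simpa using hC)
      (le_abs_self (j ^ 2))
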